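/- Let (i,j) ∈ E be an edge of a finite connected simple graph G. Then, without any assumption on the sign of c_OR-0(i,j), one has c_OR(i,j) ≥ (1−α_min)·c_OR-0(i,j) − Δ_ij(α). -/

import Mathlib

namespace Curv

open Finset

noncomputable section

variable {V : Type*} [Fintype V] [DecidableEq V] (G : SimpleGraph V) [DecidableRel G.Adj]

/-- `μ` is a probability distribution on the (finite) vertex set. -/
def IsProb (μ : V → ℝ) : Prop := (∀ x, 0 ≤ μ x) ∧ ∑ x, μ x = 1

/-- `π` is a coupling of `μ` and `ν`. -/
def IsCoupling (μ ν : V → ℝ) (π : V → V → ℝ) : Prop :=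
  (∀ x y, 0 ≤ π x y) ∧ (∀ x, ∑ y, π x y = μ x) ∧ (∀ y, ∑ x, π x y = ν y)

/-- Transport cost of a plan `π` with respect to the shortest-path graph distance. -/
def cost (π : V → V → ℝ) : ℝ := ∑ x, ∑ y, (G.dist x y : ℝ) * π x y

/-- Wasserstein-1 distance between two distributions on the vertex set. -/
def W1 (μ ν : V → ℝ) : ℝ := sInf {c : ℝ | ∃ π, IsCoupling μ ν π ∧ cost G π = c}

/-- Dirac mass at `u`. -/
def dirac (u : V) : V → ℝ := fun x => if x = u then 1 else 0

/-- Uniform distribution on the neighbours of `u`. -/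
def unif (u : V) : V → ℝ := fun x => if G.Adj u x then ((G.degree u : ℝ))⁻¹ else 0

/-- Lazy random-walk measure with laziness parameter `α`. -/
def mGen (α : ℝ) (u : V) : V → ℝ := fun x => α * dirac u x + (1 - α) * unif G u x

/-- Canonical laziness `1/(deg u + 1)`. -/
def alphaL (u : V) : ℝ := ((G.degree u : ℝ) + 1)⁻¹

/-- The lazy random-walk measure `m_u`. -/
def mLazy (u : V) : V → ℝ := mGen G (alphaL G u) u

/-- Ollivier–Ricci curvature (lazy). -/
def cOR (i j : V) : ℝ := 1 - W1 G (mLazy G i) (mLazy G j)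

/-- Non-lazy Ollivier–Ricci curvature. -/
def cOR0 (i j : V) : ℝ := 1 - W1 G (unif G i) (unif G j)

/-- Positive part `[x]₊`. -/
def pos (x : ℝ) : ℝ := max x 0

/-- Triangle count `△(u,v)`. -/
def tri (u v : V) : ℕ := (G.neighborFinset u ∩ G.neighborFinset v).card

/-- Unique neighbours `N(u) \ (N(v) ∪ {v})`. -/
def uniq (u v : V) : Finset V := G.neighborFinset u \ insert v (G.neighborFinset v)

/-- `ξ_u(u,v)`: unique neighbours of `u` having a neighbour among unique neighbours of `v`. -/
def xiSet (u v : V) : Finset V := (uniq G u v).filter fun k => ∃ w ∈ uniq G v u, G.Adj k w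

/-- `Ξ_uv`. -/
def Xi (u v : V) : ℕ := (xiSet G u v).card + (xiSet G v u).card

/-- `□̃(k,u,v) = |N(k) ∩ (N(v)\(N(u)∪{u}))|`. -/
def boxT (k u v : V) : ℕ := (G.neighborFinset k ∩ uniq G v u).card

/-- `ϖ_max(u,v)`. -/
def varpi (u v : V) : ℕ :=
  max (((G.neighborFinset u).erase v).sup fun k => boxT G k u v)
      (((G.neighborFinset v).erase u).sup fun w => boxT G w v u)

/-- `þ_max(u,v) = ϖ_max(u,v)·max{ρ_u,ρ_v}`. -/
def thMax (u v : V) : ℕ := varpi G u v * max (G.degree u) (G.degree v)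

/-- Edgewise 4-cycle coefficient `C₄(u,v)`. -/
def C4 (u v : V) : ℝ := if 0 < Xi G u v then (Xi G u v : ℝ) / (thMax G u v : ℝ) else 0

/-- Graph-wide 4-cycle constant `C₄(G)`. -/
def C4Graph : ℝ := sSup {x : ℝ | ∃ u v, G.Adj u v ∧ x = C4 G u v}

def rhoMin (i j : V) : ℕ := min (G.degree i) (G.degree j)

def rhoMax (i j : V) : ℕ := max (G.degree i) (G.degree j)

/-- `𝔖(i,j)`. -/
def frakS (i j : V) : ℝ := 2 / (G.degree i : ℝ) + 2 / (G.degree j : ℝ) - 2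

/-- `𝔗(i,j)`. -/
def frakT (i j : V) : ℝ := 2 / (rhoMax G i j : ℝ) + 1 / (rhoMin G i j : ℝ)

/-- `𝔎(i,j)`. -/
def frakK (i j : V) : ℝ := 1 - 1 / (rhoMin G i j : ℝ) - 1 / (rhoMax G i j : ℝ)

/-- `Z_min(i,j)`. -/
def Zmin (i j : V) : ℝ := (tri G i j : ℝ) / (rhoMin G i j : ℝ)

/-- `Z_max(i,j)`. -/
def Zmax (i j : V) : ℝ := (tri G i j : ℝ) / (rhoMax G i j : ℝ)

/-- Balanced Forman curvature. -/
def cBF (i j : V) : ℝ :=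
  if rhoMin G i j = 1 then 0
  else frakS G i j + frakT G i j * (tri G i j : ℝ) + C4 G i j

/-- `M` is a matching in the cross-edge bipartite graph `B_ij`. -/
def IsCrossMatching (i j : V) (M : Finset (V × V)) : Prop :=
  (∀ p ∈ M, p.1 ∈ uniq G i j ∧ p.2 ∈ uniq G j i ∧ G.Adj p.1 p.2) ∧
  (∀ p ∈ M, ∀ q ∈ M, p ≠ q → p.1 ≠ q.1 ∧ p.2 ≠ q.2)

/-- Maximum matching size `𝔪(i,j)` in the cross-edge bipartite graph. -/
def matchNum (i j : V) : ℕ :=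
  sSup {n : ℕ | ∃ M : Finset (V × V), IsCrossMatching G i j M ∧ M.card = n}

/-- `𝒮(i,j) = 𝔪(i,j)/ρ_max`. -/
def SS (i j : V) : ℝ := (matchNum G i j : ℝ) / (rhoMax G i j : ℝ)

/-- Lazy per-neighbour weight `w_u = (1-α)/ρ_u`. -/
def wA (α : ℝ) (u : V) : ℝ := (1 - α) / (G.degree u : ℝ)

/-- Lazy conductance sum `Σ`. -/
def SigmaA (αi αj : ℝ) (i j : V) : ℝ :=
  (G.degree i : ℝ) / (1 - αi) + (G.degree j : ℝ) / (1 - αj)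

/-- `Const_α`. -/
def ConstA (αi αj : ℝ) (i j : V) : ℝ :=
  -1 + 2 * (min αi ((1 - αj) / (G.degree j : ℝ)) + min αj ((1 - αi) / (G.degree i : ℝ)))
    + (pos (αi - (1 - αj) / (G.degree j : ℝ)) + pos ((1 - αj) / (G.degree j : ℝ) - αi)
      + pos (αj - (1 - αi) / (G.degree i : ℝ)) + pos ((1 - αi) / (G.degree i : ℝ) - αj))
    + ((G.degree i : ℝ) + (G.degree j : ℝ) - 2) / SigmaA G αi αj i j

/-- `Slope_α`. -/
def SlopeA (αi αj : ℝ) (i j : V) : ℝ := wA G αi i + wA G αj j - 2 / SigmaA G αi αj i j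

/-- `α_⋆`: `α_min` when the non-lazy curvature is nonnegative, `α_max` otherwise. -/
def alphaStar (i j : V) : ℝ :=
  if 0 ≤ cOR0 G i j then min (alphaL G i) (alphaL G j) else max (alphaL G i) (alphaL G j)

/-- `Δ_ij(α) = α_max − α_min` for the canonical laziness. -/
def DeltaL (i j : V) : ℝ := max (alphaL G i) (alphaL G j) - min (alphaL G i) (alphaL G j)

lemma cost_nonneg' (π : V → V → ℝ) (h : ∀ x y, 0 ≤ π x y) : 0 ≤ cost G π :=
  Finset.sum_nonneg fun x _ => Finset.sum_nonneg fun y _ =>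
    mul_nonneg (Nat.cast_nonneg _) (h x y)

lemma W1_le' (μ ν : V → ℝ) (π : V → V → ℝ) (h : IsCoupling μ ν π) : W1 G μ ν ≤ cost G π := by
  refine csInf_le ⟨0, ?_⟩ ⟨π, h, rfl⟩
  rintro c ⟨p, hp, rfl⟩
  exact cost_nonneg' G p hp.1

lemma coupling_swap {μ ν : V → ℝ} {π : V → V → ℝ} (h : IsCoupling μ ν π) :
    IsCoupling ν μ (fun x y => π y x) :=
  ⟨fun x y => h.1 y x, h.2.2, h.2.1⟩

lemma cost_swap (π : V → V → ℝ) : cost G (fun x y => π y x) = cost G π := by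
  unfold cost
  rw [Finset.sum_comm]
  simp only [SimpleGraph.dist_comm]

lemma W1_symm' (μ ν : V → ℝ) : W1 G μ ν = W1 G ν μ := by
  unfold W1
  congr 1
  ext c
  constructor
  · rintro ⟨p, hp, rfl⟩
    exact ⟨_, coupling_swap hp, cost_swap G p⟩
  · rintro ⟨p, hp, rfl⟩
    exact ⟨_, coupling_swap hp, cost_swap G p⟩

lemma step1 (hG : G.Connected) (i j : V) (hij : G.Adj i j)
    (a b : ℝ) (ha : 0 ≤ a) (hb : b ≤ 1) (hab : a ≤ b)
    (μ ν : V → ℝ) (hμ : IsProb μ) (hν : IsProb ν)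
    (hsj : ∀ x, ¬ G.Adj j x → ν x = 0) (π : V → V → ℝ) (hπ : IsCoupling μ ν π) :
    W1 G (fun x => a * dirac i x + (1 - a) * μ x) (fun x => b * dirac j x + (1 - b) * ν x)
      ≤ a + (1 - a) * cost G π + (b - a) := by
  have hd : ∀ u : V, ∑ x, dirac u x = 1 := by intro u; simp [dirac]
  have hd0 : ∀ u x : V, 0 ≤ dirac u x := by intro u x; unfold dirac; split_ifs <;> norm_num
  have hc : IsCoupling (fun x => a * dirac i x + (1 - a) * μ x)
      (fun x => b * dirac j x + (1 - b) * ν x)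
      (fun x y => a * (dirac i x * dirac j y) + (1 - b) * π x y
        + (b - a) * (μ x * dirac j y)) := by
    refine ⟨fun x y => ?_, fun x => ?_, fun y => ?_⟩
    · have h1 := mul_nonneg ha (mul_nonneg (hd0 i x) (hd0 j y))
      have h2 := mul_nonneg (sub_nonneg.2 hb) (hπ.1 x y)
      have h3 := mul_nonneg (sub_nonneg.2 hab) (mul_nonneg (hμ.1 x) (hd0 j y))
      linarith
    · simp only [Finset.sum_add_distrib, ← Finset.mul_sum, hd, hπ.2.1]
      ring
    · simp only [Finset.sum_add_distrib, ← Finset.mul_sum, ← Finset.sum_mul, hd, hπ.2.2, hμ.2]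
      ring
  refine (W1_le' G _ _ _ hc).trans ?_
  have hcost : cost G (fun x y => a * (dirac i x * dirac j y) + (1 - b) * π x y
        + (b - a) * (μ x * dirac j y))
      = a + (1 - b) * cost G π + (b - a) * ∑ x, (G.dist x j : ℝ) * μ x := by
    have e1 : ∑ x, ∑ y, (G.dist x y : ℝ) * (dirac i x * dirac j y) = 1 := by
      simp [dirac, SimpleGraph.dist_eq_one_iff_adj.2 hij]
    have e2 : ∑ x, ∑ y, (G.dist x y : ℝ) * (μ x * dirac j y)
        = ∑ x, (G.dist x j : ℝ) * μ x := by
      simp [dirac]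
    rw [← e2]
    have e3 : a = a * ∑ x, ∑ y, (G.dist x y : ℝ) * (dirac i x * dirac j y) := by
      rw [e1, mul_one]
    refine Eq.trans ?_ (congrArg (fun t => t + (1 - b) * cost G π + (b - a) *
      ∑ x, ∑ y, (G.dist x y : ℝ) * (μ x * dirac j y)) e3.symm)
    simp only [cost, Finset.mul_sum, ← Finset.sum_add_distrib]
    refine Finset.sum_congr rfl fun x _ => Finset.sum_congr rfl fun y _ => ?_
    ring
  have hE : ∑ x, (G.dist x j : ℝ) * μ x ≤ cost G π + 1 := by
    have e1 : ∑ y, (G.dist y j : ℝ) * ν y = 1 := by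
      rw [← hν.2]
      refine Finset.sum_congr rfl fun y _ => ?_
      by_cases h : G.Adj j y
      · simp [SimpleGraph.dist_eq_one_iff_adj.2 h.symm]
      · simp [hsj y h]
    have e2 : ∑ x, ∑ y, (G.dist y j : ℝ) * π x y = 1 := by
      rw [Finset.sum_comm]
      simp only [← Finset.mul_sum, hπ.2.2, e1]
    rw [← e2]
    simp only [cost, ← Finset.sum_add_distrib, ← hπ.2.1, Finset.mul_sum]
    refine Finset.sum_le_sum fun x _ => Finset.sum_le_sum fun y _ => ?_
    rw [← add_mul]
    refine mul_le_mul_of_nonneg_right ?_ (hπ.1 x y)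
    exact_mod_cast hG.dist_triangle
  rw [hcost]
  have := mul_le_mul_of_nonneg_left hE (sub_nonneg.2 hab)
  linarith

lemma step2 (hG : G.Connected) (i j : V) (hij : G.Adj i j)
    (a b : ℝ) (ha : 0 ≤ a) (hb : b ≤ 1) (hab : a ≤ b)
    (μ ν : V → ℝ) (hμ : IsProb μ) (hν : IsProb ν)
    (hsj : ∀ x, ¬ G.Adj j x → ν x = 0) :
    W1 G (fun x => a * dirac i x + (1 - a) * μ x) (fun x => b * dirac j x + (1 - b) * ν x)
      ≤ a + (1 - a) * W1 G μ ν + (b - a) := by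
  have key := step1 G hG i j hij a b ha hb hab μ ν hμ hν hsj
  have hprod : IsCoupling μ ν (fun x y => μ x * ν y) := by
    refine ⟨fun x y => mul_nonneg (hμ.1 x) (hν.1 y), fun x => ?_, fun y => ?_⟩
    · rw [← Finset.mul_sum, hν.2, mul_one]
    · rw [← Finset.sum_mul, hμ.2, one_mul]
  set K := W1 G (fun x => a * dirac i x + (1 - a) * μ x)
    (fun x => b * dirac j x + (1 - b) * ν x)
  rcases eq_or_lt_of_le (hab.trans hb) with h | h
  · have := key _ hprod
    subst h
    simpa using this
  · have h' : 0 < 1 - a := by linarith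
    have : (K - b) / (1 - a) ≤ W1 G μ ν := by
      refine le_csInf ⟨_, _, hprod, rfl⟩ ?_
      rintro c ⟨p, hp, rfl⟩
      rw [div_le_iff₀ h']
      have := key p hp
      linarith
    rw [div_le_iff₀ h'] at this
    linarith

/-- sign-agnostic bound `c_OR ≥ (1−α_min)·c_OR-0 − Δ_ij(α)`. -/
theorem stmt6 (hG : G.Connected) (i j : V) (hij : G.Adj i j)
    (αi αj : ℝ) (hαi : αi ∈ Set.Icc (0:ℝ) 1) (hαj : αj ∈ Set.Icc (0:ℝ) 1)
    (νi νj : V → ℝ) (hνi : IsProb νi) (hνj : IsProb νj)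
    (hsi : ∀ x, ¬ G.Adj i x → νi x = 0) (hsj : ∀ x, ¬ G.Adj j x → νj x = 0) :
    1 - W1 G (fun x => αi * dirac i x + (1 - αi) * νi x)
          (fun x => αj * dirac j x + (1 - αj) * νj x)
      ≥ (1 - min αi αj) * (1 - W1 G νi νj) - (max αi αj - min αi αj) := by
  rcases le_total αi αj with h | h
  · have := step2 G hG i j hij αi αj hαi.1 hαj.2 h νi νj hνi hνj hsj
    rw [min_eq_left h, max_eq_right h]
    linarith
  · have := step2 G hG j i hij.symm αj αi hαj.1 hαi.2 h νj νi hνj hνi hsi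
    rw [min_eq_right h, max_eq_left h, W1_symm' G νi νj,
      W1_symm' G (fun x => αi * dirac i x + (1 - αi) * νi x)]
    linarith

end

end Curv
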